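/- arXiv:1504.04164 — 3 statements merged into one kernel-verified Lean document; each statement's English description precedes it below -/
import Mathlib

section
/- Let H(R) denote the Heisenberg group of upper unitriangular 3×3 matrices over a ring R. For all but finitely many primes p the following holds for every finite extension K of ℚ_p, with valuation ring 𝒪_K and residue field of cardinality q_K: writing r̃_n for the number of twist-equivalence classes of continuous irreducible representations H(𝒪_K) → GL_n(ℂ) of the topological group H(𝒪_K), one has r̃_1 = 1, r̃_{q_K^i} = q_K^i − q_K^{i−1} for every integer i ≥ 1, and r̃_n = 0 for every n ≥ 2 that is not a positive power of q_K. Equivalently, the twist-representation zeta function of H(𝒪_K) equals (1 − q_K^{−s})/(1 − q_K^{1−s}). -/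
noncomputable section

/-- The Heisenberg group over `R`: the group of upper unitriangular 3×3 matrices
`[[1, a, c], [0, 1, b], [0, 0, 1]]`, recorded via their entries `a`, `b`, `c`. -/
@[ext]
structure Heisenberg (R : Type) where
  a : R
  b : R
  c : R

namespace Heisenberg

variable {R : Type} [CommRing R]

instance : Group (Heisenberg R) where
  mul x y := ⟨x.a + y.a, x.b + y.b, x.c + y.c + x.a * y.b⟩
  one := ⟨0, 0, 0⟩
  inv x := ⟨-x.a, -x.b, -x.c + x.a * x.b⟩
  mul_assoc x y z := by
    refine Heisenberg.ext ?_ ?_ ?_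
    · show (x.a + y.a) + z.a = x.a + (y.a + z.a); ring
    · show (x.b + y.b) + z.b = x.b + (y.b + z.b); ring
    · show (x.c + y.c + x.a * y.b) + z.c + (x.a + y.a) * z.b
        = x.c + (y.c + z.c + y.a * z.b) + x.a * (y.b + z.b); ring
  one_mul x := by
    refine Heisenberg.ext ?_ ?_ ?_
    · show (0 : R) + x.a = x.a; ring
    · show (0 : R) + x.b = x.b; ring
    · show (0 : R) + x.c + 0 * x.b = x.c; ring
  mul_one x := by
    refine Heisenberg.ext ?_ ?_ ?_
    · show x.a + 0 = x.a; ring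
    · show x.b + 0 = x.b; ring
    · show x.c + 0 + x.a * 0 = x.c; ring
  inv_mul_cancel x := by
    refine Heisenberg.ext ?_ ?_ ?_
    · show -x.a + x.a = (0 : R); ring
    · show -x.b + x.b = (0 : R); ring
    · show (-x.c + x.a * x.b) + x.c + (-x.a) * x.b = (0 : R); ring

instance [TopologicalSpace R] : TopologicalSpace (Heisenberg R) :=
  TopologicalSpace.induced (fun x => (x.a, x.b, x.c)) inferInstance

end Heisenberg

/-- irreducibility of a finite-dimensional complex representation -/
def IsIrreducibleRep {G : Type} [Group G] {n : ℕ} (ρ : G →* GL (Fin n) ℂ) : Prop :=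
  ∀ U : Submodule ℂ (Fin n → ℂ),
    (∀ g : G, ∀ x ∈ U, Matrix.mulVec (ρ g : Matrix (Fin n) (Fin n) ℂ) x ∈ U) →
    U = ⊥ ∨ U = ⊤

/-- continuous irreducible `n`-dimensional complex representations of a topological
group `G` -/
def ContIrrRep (G : Type) [Group G] [TopologicalSpace G] (n : ℕ) : Type :=
  {ρ : G →* GL (Fin n) ℂ //
    Continuous (fun g : G => (ρ g : Matrix (Fin n) (Fin n) ℂ)) ∧ IsIrreducibleRep ρ}

/-- twist-equivalence: `ρ ≃ (σ ⊗ α) ` for a continuous `1`-dimensional character `α` -/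
def contTwistRel (G : Type) [Group G] [TopologicalSpace G] (n : ℕ) :
    ContIrrRep G n → ContIrrRep G n → Prop :=
  fun ρ σ => ∃ α : G →* ℂˣ, Continuous (fun g : G => (α g : ℂ)) ∧
    ∃ T : GL (Fin n) ℂ, ∀ g : G,
      (ρ.1 g : Matrix (Fin n) (Fin n) ℂ)
        = (α g : ℂ) • ((T * σ.1 g * T⁻¹ : GL (Fin n) ℂ) : Matrix (Fin n) (Fin n) ℂ)

/-- the number `r̃_n(G)` of twist-equivalence classes of continuous irreducible
`n`-dimensional complex representations of `G` -/
noncomputable def rTildeCont (G : Type) [Group G] [TopologicalSpace G] (n : ℕ) : ℕ :=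
  Nat.card (Quot (contTwistRel G n))

namespace HeisProof

/-- The conductor of an additive character: the largest ideal on which it is trivial. -/
def cond {R : Type} [CommRing R] (ψ : AddChar R ℂ) : Ideal R where
  carrier := {c | ∀ r, ψ (r * c) = 1}
  zero_mem' := by simp
  add_mem' := by
    intro a b ha hb r
    rw [mul_add, AddChar.map_add_eq_mul, ha r, hb r, one_mul]
  smul_mem' := by
    intro c x hx r
    rw [smul_eq_mul, ← mul_assoc]
    exact hx _

theorem mem_cond {R : Type} [CommRing R] {ψ : AddChar R ℂ} {c : R} :
    c ∈ cond ψ ↔ ∀ r, ψ (r * c) = 1 := Iff.rfl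

theorem le_cond {R : Type} [CommRing R] {ψ : AddChar R ℂ} {I : Ideal R} :
    I ≤ cond ψ ↔ ∀ x ∈ I, ψ x = 1 := by
  constructor
  · intro h x hx
    simpa using h hx 1
  · intro h x hx r
    exact h _ (I.mul_mem_left r hx)

/-- characters trivial on an ideal are characters of the quotient -/
def charEquiv {R : Type} [CommRing R] (I : Ideal R) :
    {ψ : AddChar R ℂ // I ≤ cond ψ} ≃ AddChar (R ⧸ I) ℂ where
  toFun ψ :=
    { toFun := fun x => ψ.1 (Quotient.out x)
      map_zero_eq_one' := by
        apply le_cond.1 ψ.2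
        rw [← Ideal.Quotient.eq_zero_iff_mem]
        exact Quotient.out_eq _
      map_add_eq_mul' := by
        intro a b
        rw [← AddChar.map_add_eq_mul]
        have h : Quotient.out (a + b) - (Quotient.out a + Quotient.out b) ∈ I := by
          rw [← Ideal.Quotient.eq_zero_iff_mem, map_sub, map_add, sub_eq_zero]
          exact (Quotient.out_eq _).trans
            (congrArg₂ (· + ·) (Quotient.out_eq a).symm (Quotient.out_eq b).symm)
        have h2 := le_cond.1 ψ.2 _ h
        have h3 := ψ.1.map_add_eq_mul
          (Quotient.out (a + b) - (Quotient.out a + Quotient.out b))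
          (Quotient.out a + Quotient.out b)
        rwa [sub_add_cancel, h2, one_mul] at h3 }
  invFun χ := ⟨χ.compAddMonoidHom (Ideal.Quotient.mk I).toAddMonoidHom, by
    rw [le_cond]
    intro x hx
    simp [AddChar.compAddMonoidHom, Ideal.Quotient.eq_zero_iff_mem.2 hx]⟩
  left_inv := by
    rintro ⟨ψ, hψ⟩
    apply Subtype.ext
    ext x
    show ψ (Quotient.out (Ideal.Quotient.mk I x)) = ψ x
    have h : Quotient.out (Ideal.Quotient.mk I x) - x ∈ I := by
      rw [← Ideal.Quotient.eq_zero_iff_mem, map_sub, sub_eq_zero]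
      exact Quotient.out_eq _
    have h2 := le_cond.1 hψ _ h
    have h3 := ψ.map_add_eq_mul (Quotient.out (Ideal.Quotient.mk I x) - x) x
    rwa [sub_add_cancel, h2, one_mul] at h3
  right_inv := by
    intro χ
    ext x
    show χ (Ideal.Quotient.mk I (Quotient.out x)) = χ x
    exact congrArg χ (Quotient.out_eq _)

theorem card_char {R : Type} [CommRing R] (I : Ideal R) [Finite (R ⧸ I)] :
    Nat.card {ψ : AddChar R ℂ // I ≤ cond ψ} = Nat.card (R ⧸ I) := by
  have := Fintype.ofFinite (R ⧸ I)
  rw [Nat.card_congr (charEquiv I), Nat.card_eq_fintype_card, Nat.card_eq_fintype_card]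
  exact AddChar.card_eq

theorem continuous_of_le_cond {R : Type} [CommRing R] [TopologicalSpace R] [IsTopologicalRing R]
    {I : Ideal R} (hI : IsOpen (X := R) I) {ψ : AddChar R ℂ} (h : I ≤ cond ψ) :
    Continuous ψ := by
  rw [continuous_iff_continuousAt]
  intro x
  have h1 : ∀ᶠ y in nhds x, ψ y = ψ x := by
    have h0 : (fun y => y - x) ⁻¹' (I : Set R) ∈ nhds x := by
      apply (hI.preimage (by fun_prop)).mem_nhds
      simp
    filter_upwards [h0] with y hy
    have h2 := le_cond.1 h _ hy
    have h3 := ψ.map_add_eq_mul (y - x) x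
    rwa [sub_add_cancel, h2, one_mul] at h3
  exact (continuousAt_congr h1).2 continuousAt_const

set_option linter.unusedSectionVars false

section count
variable {R : Type} [CommRing R] [TopologicalSpace R] [IsTopologicalRing R] [CompactSpace R]
  [T2Space R] [IsDedekindDomain R] [IsLocalRing R]

theorem ideal_eq_pow (P : Ideal R) (hP : P.IsMaximal) (I : Ideal R) (hI : I ≠ ⊥) :
    ∃ n : ℕ, I = P ^ n := by
  rw [IsLocalRing.eq_maximalIdeal hP]
  have h := (tfae_of_isNoetherianRing_of_isLocalRing_of_isDomain R).out 2 6
  exact h.1 ‹IsDedekindDomain R› I hI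

theorem finite_quot_pow (P : Ideal R) (hP : P.IsMaximal) (i : ℕ) : Finite (R ⧸ P ^ i) := 
  Ideal.finite_quotient_pow (IsNoetherian.noetherian _) _

theorem card_quot_pow (hR : ¬ IsField R) (P : Ideal R) (hP : P.IsMaximal) (i : ℕ) :
    Nat.card (R ⧸ P ^ i) = Nat.card (R ⧸ P) ^ i := by
  have hb : P ≠ ⊥ := Ring.ne_bot_of_isMaximal_of_not_isField hP hR
  have := hP.isPrime
  exact cardQuot_pow_of_prime hb

theorem one_lt_q (P : Ideal R) (hP : P.IsMaximal) : 1 < Nat.card (R ⧸ P) := by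
  have : Finite (R ⧸ P) := inferInstance
  have := Ideal.Quotient.nontrivial_iff.2 hP.ne_top
  exact Finite.one_lt_card

theorem infinite_R (hR : ¬ IsField R) : Infinite R := by
  by_contra h
  rw [not_infinite_iff_finite] at h
  exact hR (Finite.isField_of_domain R)

theorem cond_pow_of_card (hR : ¬ IsField R) (P : Ideal R) (hP : P.IsMaximal) (I : Ideal R) (n : ℕ)
    (hn : n ≠ 0) (h : Nat.card (R ⧸ I) = n) : ∃ i, I = P ^ i ∧ n = Nat.card (R ⧸ P) ^ i := by
  have hI : I ≠ ⊥ := by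
    rintro rfl
    have := infinite_R hR
    have : Infinite (R ⧸ (⊥ : Ideal R)) :=
      Infinite.of_injective _ (RingEquiv.quotientBot R).symm.injective
    rw [Nat.card_eq_zero_of_infinite] at h
    exact hn h.symm
  obtain ⟨i, rfl⟩ := ideal_eq_pow P hP I hI
  exact ⟨i, rfl, by rw [← h, card_quot_pow hR P hP]⟩

theorem count_pow (hR : ¬ IsField R) (P : Ideal R) (hP : P.IsMaximal) (i : ℕ) (hi : 1 ≤ i) :
    Nat.card {ψ : AddChar R ℂ // Continuous ψ ∧
      Nat.card (R ⧸ cond ψ) = Nat.card (R ⧸ P) ^ i} =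
      Nat.card (R ⧸ P) ^ i - Nat.card (R ⧸ P) ^ (i - 1) := by
  have hq := one_lt_q P hP
  have hb : P ≠ ⊥ := Ring.ne_bot_of_isMaximal_of_not_isField hP hR
  have hset : {ψ : AddChar R ℂ | Continuous ψ ∧
      Nat.card (R ⧸ cond ψ) = Nat.card (R ⧸ P) ^ i} =
      {ψ | P ^ i ≤ cond ψ} \ {ψ | P ^ (i - 1) ≤ cond ψ} := by
    ext ψ
    simp only [Set.mem_ofPred_eq, Set.mem_sdiff]
    constructor
    · rintro ⟨-, h⟩
      obtain ⟨j, hj, hj'⟩ := cond_pow_of_card hR P hP _ _ (pow_ne_zero _ (by omega)) h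
      have hij := Nat.pow_right_injective hq hj'
      subst hij
      rw [hj]
      refine ⟨le_rfl, fun hle => ?_⟩
      have := (Ideal.pow_right_strictAnti P hb hP.ne_top) (show i - 1 < i by omega)
      exact absurd hle (not_le_of_gt this)
    · rintro ⟨h1, h2⟩
      have hop : IsOpen (X := R) (P ^ i : Ideal R) := Ideal.isOpen_pow_of_isMaximal P i
      refine ⟨continuous_of_le_cond hop h1, ?_⟩
      have hne : cond ψ ≠ ⊥ := fun h => by
        rw [h, le_bot_iff] at h1
        exact hb (pow_eq_zero_iff (by omega) |>.1 h1)
      obtain ⟨j, hj⟩ := ideal_eq_pow P hP _ hne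
      rw [hj] at h1 h2 ⊢
      have : j = i := by
        apply le_antisymm
        · exact (Ideal.pow_right_strictAnti P hb hP.ne_top).le_iff_ge.1 h1
        · by_contra hlt
          exact h2 (Ideal.pow_le_pow_right (by omega))
      rw [this, card_quot_pow hR P hP]
  have hfin := fun j => finite_quot_pow P hP j
  have hc : ∀ j, Set.ncard {ψ : AddChar R ℂ | P ^ j ≤ cond ψ} = Nat.card (R ⧸ P) ^ j := by
    intro j
    have := card_char (P ^ j)
    rw [card_quot_pow hR P hP] at this
    exact this
  have : Set.ncard {ψ : AddChar R ℂ | Continuous ψ ∧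
      Nat.card (R ⧸ cond ψ) = Nat.card (R ⧸ P) ^ i} = 
      Nat.card (R ⧸ P) ^ i - Nat.card (R ⧸ P) ^ (i - 1) := by
    have hf : {ψ : AddChar R ℂ | P ^ (i - 1) ≤ cond ψ}.Finite := by
      apply Set.finite_of_ncard_ne_zero
      rw [hc]
      exact pow_ne_zero _ (by omega)
    rw [hset, Set.ncard_sdiff _ hf, hc, hc]
    intro ψ h
    exact le_trans (Ideal.pow_le_pow_right (by omega)) h
  exact this

theorem count_one (R : Type) [CommRing R] [TopologicalSpace R] :
    Nat.card {ψ : AddChar R ℂ // Continuous ψ ∧ Nat.card (R ⧸ cond ψ) = 1} = 1 := by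
  rw [Nat.card_eq_one_iff_unique]
  have key : ∀ ψ : AddChar R ℂ, Nat.card (R ⧸ cond ψ) = 1 ↔ ψ = 1 := by
    intro ψ
    rw [Nat.card_eq_one_iff_unique]
    constructor
    · rintro ⟨h, -⟩
      have : cond ψ = ⊤ := Ideal.Quotient.subsingleton_iff.1 h
      ext x
      have hx : x ∈ cond ψ := this ▸ Submodule.mem_top
      simpa using hx 1
    · rintro rfl
      have : cond (1 : AddChar R ℂ) = ⊤ := by
        rw [eq_top_iff]
        intro x _ r
        simp
      exact ⟨Ideal.Quotient.subsingleton_iff.2 this, ⟨0⟩⟩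
  refine ⟨⟨?_⟩, ⟨⟨1, ?_, (key 1).2 rfl⟩⟩⟩
  · rintro ⟨a, -, ha⟩ ⟨b, -, hb⟩
    rw [key] at ha hb
    subst ha; subst hb; rfl
  · exact continuous_const (y := (1:ℂ))

theorem count_other (hR : ¬ IsField R) (P : Ideal R) (hP : P.IsMaximal) (n : ℕ) (hn : 2 ≤ n)
    (h : ∀ i : ℕ, 1 ≤ i → n ≠ Nat.card (R ⧸ P) ^ i) :
    Nat.card {ψ : AddChar R ℂ // Continuous ψ ∧ Nat.card (R ⧸ cond ψ) = n} = 0 := by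
  rw [Nat.card_eq_zero]
  left
  refine ⟨?_⟩
  rintro ⟨ψ, -, h2⟩
  obtain ⟨i, -, hi⟩ := cond_pow_of_card hR P hP _ _ (by omega) h2
  rcases Nat.eq_zero_or_pos i with rfl | hi0
  · simp at hi; omega
  · exact h i hi0 hi

end count

set_option linter.unusedSectionVars false

section arith
variable (p : ℕ) [Fact p.Prime] (K : Type) [NormedField K] [NormedAlgebra ℚ_[p] K]
  [FiniteDimensional ℚ_[p] K] [Algebra ℤ_[p] K] [IsScalarTower ℤ_[p] ℚ_[p] K]

theorem mem_iff_norm (x : K) : x ∈ integralClosure ℤ_[p] K ↔ ‖x‖ ≤ 1 := by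
  have hxint : IsIntegral ℚ_[p] x := Algebra.IsIntegral.isIntegral x
  rw [NormedAlgebra.norm_eq_spectralNorm ℚ_[p] x, spectralNorm,
    spectralValue_le_one_iff (minpoly.monic hxint), mem_integralClosure_iff]
  constructor
  · intro hx n
    rw [minpoly.isIntegrallyClosed_eq_field_fractions' ℚ_[p] hx, Polynomial.coeff_map]
    exact PadicInt.norm_le_one _
  · intro h
    have hl : minpoly ℚ_[p] x ∈ Polynomial.lifts (algebraMap ℤ_[p] ℚ_[p]) := by
      rw [Polynomial.lifts_iff_coeff_lifts]
      intro n
      exact ⟨⟨_, h n⟩, rfl⟩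
    obtain ⟨Q, hQ, -, hQm⟩ := Polynomial.lifts_and_natDegree_eq_and_monic hl (minpoly.monic hxint)
    refine ⟨Q, hQm, ?_⟩
    rw [IsScalarTower.algebraMap_eq ℤ_[p] ℚ_[p] K, ← Polynomial.eval₂_map, hQ]
    exact minpoly.aeval _ _

theorem compact_O : CompactSpace (integralClosure ℤ_[p] K) := by
  have : ProperSpace K := FiniteDimensional.proper ℚ_[p] K
  have h : IsCompact ((integralClosure ℤ_[p] K : Set K)) := by
    have : (integralClosure ℤ_[p] K : Set K) = Metric.closedBall 0 1 := by
      ext x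
      simpa using mem_iff_norm p K x
    rw [this]
    exact isCompact_closedBall _ _
  exact isCompact_iff_compactSpace.1 h

theorem dedekind_O : IsDedekindDomain (integralClosure ℤ_[p] K) :=
  integralClosure.isDedekindDomain ℤ_[p] ℚ_[p] K

theorem isUnit_iff_norm (x : integralClosure ℤ_[p] K) : IsUnit x ↔ ‖(x : K)‖ = 1 := by
  have hx := (mem_iff_norm p K _).1 x.2
  constructor
  · rintro ⟨u, rfl⟩
    have h2 := (mem_iff_norm p K _).1 (u⁻¹).1.2
    have h3 : ((u : integralClosure ℤ_[p] K) : K) * ((u⁻¹).1 : K) = 1 := by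
      have := u.mul_inv
      exact congrArg Subtype.val this
    have h4 := congrArg norm h3
    rw [norm_mul, norm_one] at h4
    nlinarith [norm_nonneg ((u : integralClosure ℤ_[p] K) : K), norm_nonneg ((u⁻¹).1 : K)]
  · intro h
    have h0 : (x : K) ≠ 0 := by
      intro h0
      rw [h0, norm_zero] at h
      exact zero_ne_one h
    refine IsUnit.of_mul_eq_one ⟨(x : K)⁻¹, ?_⟩ ?_
    · rw [mem_iff_norm, norm_inv, h, inv_one]
    · apply Subtype.ext
      exact mul_inv_cancel₀ h0

theorem local_O : IsLocalRing (integralClosure ℤ_[p] K) := by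
  have : IsUltrametricDist K := IsUltrametricDist.of_normedAlgebra ℚ_[p]
  refine IsLocalRing.of_nonunits_add ?_
  intro a b ha hb
  rw [mem_nonunits_iff, isUnit_iff_norm] at *
  have ha' := lt_of_le_of_ne ((mem_iff_norm p K _).1 a.2) ha
  have hb' := lt_of_le_of_ne ((mem_iff_norm p K _).1 b.2) hb
  have := IsUltrametricDist.norm_add_le_max (a : K) (b : K)
  exact (lt_of_le_of_lt this (max_lt ha' hb')).ne

theorem not_field_O : ¬ IsField (integralClosure ℤ_[p] K) := by
  intro h
  have hn : ‖(((p : integralClosure ℤ_[p] K)) : K)‖ = (p : ℝ)⁻¹ := by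
    have : (((p : integralClosure ℤ_[p] K)) : K) = algebraMap ℚ_[p] K (p : ℚ_[p]) := by simp
    rw [this, norm_algebraMap', Padic.norm_p]
  have hp1 : (1 : ℝ) < p := by exact_mod_cast (Fact.out : p.Prime).one_lt
  have hp : (p : integralClosure ℤ_[p] K) ≠ 0 := by
    intro h0
    rw [h0] at hn
    have h1 : ‖((0 : integralClosure ℤ_[p] K) : K)‖ = 0 := norm_zero
    rw [h1] at hn
    have : (0 : ℝ) < (p : ℝ)⁻¹ := by positivity
    linarith
  obtain ⟨y, hy⟩ := h.mul_inv_cancel hp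
  have := (isUnit_iff_norm p K _).1 (IsUnit.of_mul_eq_one y hy)
  rw [hn, inv_eq_one] at this
  linarith

end arith
end HeisProof
namespace HeisProof

set_option linter.unusedSectionVars false

section rep
variable {R : Type} [CommRing R] {n : ℕ}

theorem mul_def' (x y : Heisenberg R) :
    x * y = ⟨x.a + y.a, x.b + y.b, x.c + y.c + x.a * y.b⟩ := rfl

theorem one_def' : (1 : Heisenberg R) = ⟨0, 0, 0⟩ := rfl

theorem mk_eq (y : R) (I : Ideal R) :
    Quotient.out (Ideal.Quotient.mk I y) - y ∈ I := by
  rw [← Ideal.Quotient.eq_zero_iff_mem, map_sub, sub_eq_zero]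
  exact Quotient.out_eq _

theorem mk_out (I : Ideal R) (x : R ⧸ I) : Ideal.Quotient.mk I (Quotient.out x) = x :=
  Quotient.out_eq _

/-- matrix of `ρ g` -/
abbrev mat (ρ : Heisenberg R →* GL (Fin n) ℂ) (g : Heisenberg R) : Matrix (Fin n) (Fin n) ℂ :=
  (ρ g : Matrix (Fin n) (Fin n) ℂ)

theorem mat_mul (ρ : Heisenberg R →* GL (Fin n) ℂ) (g h : Heisenberg R) :
    mat ρ (g * h) = mat ρ g * mat ρ h := by
  simp [mat]

theorem mat_one (ρ : Heisenberg R →* GL (Fin n) ℂ) : mat ρ 1 = 1 := by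
  simp [mat]

/-- Schur's lemma -/
theorem schur (hn : n ≠ 0) (ρ : Heisenberg R →* GL (Fin n) ℂ) (hρ : IsIrreducibleRep ρ)
    (M : Matrix (Fin n) (Fin n) ℂ) (hM : ∀ g, M * mat ρ g = mat ρ g * M) :
    ∃ μ : ℂ, ∀ v, M.mulVec v = μ • v := by
  have : NeZero n := ⟨hn⟩
  obtain ⟨μ, hμ⟩ := Module.End.exists_eigenvalue (Matrix.mulVecLin M)
  refine ⟨μ, fun v => ?_⟩
  have h := hρ (Module.End.eigenspace (Matrix.mulVecLin M) μ) (by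
    intro g x hx
    rw [Module.End.mem_eigenspace_iff, Matrix.mulVecLin_apply] at hx ⊢
    rw [Matrix.mulVec_mulVec]
    have := hM g
    simp only [mat] at this
    rw [this, ← Matrix.mulVec_mulVec, hx, Matrix.mulVec_smul])
  rcases h with h | h
  · exact absurd h hμ
  · have hv : v ∈ Module.End.eigenspace (Matrix.mulVecLin M) μ := h ▸ Submodule.mem_top
    rw [Module.End.mem_eigenspace_iff, Matrix.mulVecLin_apply] at hv
    exact hv

/-- commuting families have a common eigenvector -/
theorem common_eigen {ι V : Type} [AddCommGroup V] [Module ℂ V] [FiniteDimensional ℂ V]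
    [Nontrivial V] (F : ι → Module.End ℂ V) (hF : ∀ i j x, F i (F j x) = F j (F i x)) :
    ∃ v : V, v ≠ 0 ∧ ∀ i, ∃ μ : ℂ, F i v = μ • v := by
  let S : Set (Submodule ℂ V) := {W | W ≠ ⊥ ∧ ∀ i, ∀ x ∈ W, F i x ∈ W}
  have hS : S.Nonempty := ⟨⊤, top_ne_bot, fun _ _ _ => Submodule.mem_top⟩
  obtain ⟨W, ⟨hW0, hWi⟩, hmin⟩ := wellFounded_lt.has_min S hS
  obtain ⟨v, hv, hv0⟩ := W.ne_bot_iff.1 hW0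
  refine ⟨v, hv0, fun i => ?_⟩
  have : Nontrivial W := ⟨⟨⟨v, hv⟩, 0, fun h => hv0 (congrArg Subtype.val h)⟩⟩
  obtain ⟨μ, hμ⟩ := Module.End.exists_eigenvalue ((F i).restrict (hWi i))
  obtain ⟨w, hw⟩ := hμ.exists_hasEigenvector
  have hwe : F i w = μ • (w : V) := by
    have := hw.apply_eq_smul
    exact congrArg Subtype.val this
  refine ⟨μ, ?_⟩
  let W' := W ⊓ Module.End.eigenspace (F i) μ
  have hW' : W' ∈ S := by
    constructor
    · rw [Submodule.ne_bot_iff]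
      refine ⟨w, ⟨w.2, ?_⟩, fun h => hw.2 (Subtype.ext h)⟩
      exact Module.End.mem_eigenspace_iff.2 hwe
    · rintro j x ⟨hx1, hx2⟩
      refine ⟨hWi j x hx1, ?_⟩
      have hx2' := Module.End.mem_eigenspace_iff.1 hx2
      apply Module.End.mem_eigenspace_iff.2
      rw [hF, hx2', map_smul]
  have heq : W' = W := by
    by_contra hne
    exact hmin W' hW' (lt_of_le_of_ne inf_le_left hne)
  have : v ∈ W' := heq ▸ hv
  exact Module.End.mem_eigenspace_iff.1 this.2

/-- separation of vectors by distinct characters -/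
theorem sep {V : Type} [AddCommGroup V] [Module ℂ V] (ψ : AddChar R ℂ) (U : Submodule ℂ V)
    (A : R → V →ₗ[ℂ] V) (hU : ∀ a, ∀ x ∈ U, A a x ∈ U) (e : R ⧸ cond ψ → V)
    (hA : ∀ a x, A a (e x) = ψ (a * Quotient.out x) • e x) (s : Finset (R ⧸ cond ψ))
    (c : R ⧸ cond ψ → ℂ) (h : ∑ x ∈ s, c x • e x ∈ U) : ∀ x ∈ s, c x • e x ∈ U := by
  intro x hx
  by_contra hne
  obtain ⟨f, hf, hUf⟩ := Submodule.exists_le_ker_of_notMem hne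
  let χ : R ⧸ cond ψ → (Multiplicative R →* ℂ) := fun x =>
    { toFun := fun a => ψ (a.toAdd * Quotient.out x)
      map_one' := by simp
      map_mul' := by
        intro a b
        rw [toAdd_mul, add_mul, AddChar.map_add_eq_mul] }
  have hχ : Function.Injective χ := by
    intro x y hxy
    rw [← mk_out _ x, ← mk_out _ y, Ideal.Quotient.eq]
    intro r
    have := DFunLike.congr_fun hxy (Multiplicative.ofAdd r)
    change ψ (r * Quotient.out x) = ψ (r * Quotient.out y) at this
    have h3 := ψ.map_add_eq_mul (r * (Quotient.out x - Quotient.out y)) (r * Quotient.out y)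
    rw [← mul_add, sub_add_cancel, this] at h3
    have hnz : ψ (r * Quotient.out y) ≠ 0 := (ψ.val_isUnit _).ne_zero
    exact (mul_right_cancel₀ hnz (by rw [one_mul]; exact h3)).symm
  have hli := (linearIndependent_monoidHom (Multiplicative R) ℂ).comp χ hχ
  rw [linearIndependent_iff'] at hli
  have := hli s (fun x => c x * f (e x)) (by
    ext a
    have h1 := hUf (hU a.toAdd _ h)
    rw [LinearMap.mem_ker, map_sum, map_sum] at h1
    rw [Finset.sum_apply, Pi.zero_apply, ← h1]
    apply Finset.sum_congr rfl
    intro y _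
    rw [map_smul, map_smul, hA, map_smul]
    simp only [Function.comp, Pi.smul_apply, smul_eq_mul]
    show c y * f (e y) * ψ (a.toAdd * Quotient.out y) = _
    ring) x hx
  apply hf
  rw [map_smul, smul_eq_mul]
  exact this

theorem psi_out (ψ : AddChar R ℂ) (a y : R) :
    ψ (a * Quotient.out (Ideal.Quotient.mk (cond ψ) y)) = ψ (a * y) := by
  have h := mk_eq y (cond ψ) a
  have h3 := ψ.map_add_eq_mul
    (a * (Quotient.out (Ideal.Quotient.mk (cond ψ) y) - y)) (a * y)
  rwa [← mul_add, sub_add_cancel, h, one_mul] at h3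

variable [TopologicalSpace R] [IsTopologicalRing R]

theorem continuous_mk {X : Type} [TopologicalSpace X] {f g h : X → R} (hf : Continuous f)
    (hg : Continuous g) (hh : Continuous h) :
    Continuous (fun x => (⟨f x, g x, h x⟩ : Heisenberg R)) :=
  continuous_induced_rng.2 (hf.prodMk (hg.prodMk hh))

theorem continuous_abc : Continuous (fun x : Heisenberg R => (x.a, x.b, x.c)) :=
  continuous_induced_dom

theorem continuous_a : Continuous (fun x : Heisenberg R => x.a) :=
  continuous_fst.comp continuous_abc
theorem continuous_b : Continuous (fun x : Heisenberg R => x.b) :=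
  (continuous_fst.comp continuous_snd).comp continuous_abc
theorem continuous_c : Continuous (fun x : Heisenberg R => x.c) :=
  (continuous_snd.comp continuous_snd).comp continuous_abc

/-- a family of matrices acting on a nonzero vector by scalars gives a continuous character -/
theorem char_of_eigen (f : R → Heisenberg R) (hf0 : f 0 = 1) (hf : ∀ x y, f (x + y) = f x * f y)
    (hfc : Continuous f) (ρ : Heisenberg R →* GL (Fin n) ℂ) (hρ : Continuous (mat ρ))
    (v : Fin n → ℂ) (hv : v ≠ 0) (h : ∀ x, ∃ μ : ℂ, (mat ρ (f x)).mulVec v = μ • v) :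
    ∃ χ : AddChar R ℂ, Continuous χ ∧ ∀ x, (mat ρ (f x)).mulVec v = χ x • v := by
  choose χ hχ using h
  have hinj : ∀ s t : ℂ, s • v = t • v → s = t := fun s t h => smul_left_injective ℂ hv h
  refine ⟨⟨χ, ?_, ?_⟩, ?_, hχ⟩
  · apply hinj
    rw [← hχ, hf0, mat_one, Matrix.one_mulVec, one_smul]
  · intro x y
    apply hinj
    rw [← hχ, hf, mat_mul, ← Matrix.mulVec_mulVec, hχ y, Matrix.mulVec_smul, hχ x, smul_smul,
      mul_comm]
  · obtain ⟨j, hj⟩ : ∃ j, v j ≠ 0 := by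
      by_contra hcon
      push Not at hcon
      exact hv (funext hcon)
    have : (χ : R → ℂ) = fun x => (mat ρ (f x)).mulVec v j / v j := by
      ext x
      rw [hχ, Pi.smul_apply, smul_eq_mul, mul_div_cancel_right₀ _ hj]
    show Continuous χ
    rw [this]
    have h1 : Continuous fun x => (mat ρ (f x)).mulVec v :=
      (hρ.comp hfc).matrix_mulVec continuous_const
    exact ((continuous_apply j).comp h1).div_const _

/-- `ρ` has central character `ψ` -/
def IsCentral (ρ : Heisenberg R →* GL (Fin n) ℂ) (ψ : AddChar R ℂ) : Prop :=
  ∀ c v, (mat ρ ⟨0, 0, c⟩).mulVec v = ψ c • v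

theorem exists_central (hn : n ≠ 0) (ρ : Heisenberg R →* GL (Fin n) ℂ) (hρ : Continuous (mat ρ))
    (hi : IsIrreducibleRep ρ) : ∃ ψ : AddChar R ℂ, Continuous ψ ∧ IsCentral ρ ψ := by
  have : NeZero n := ⟨hn⟩
  have hs : ∀ c : R, ∃ μ : ℂ, ∀ v, (mat ρ ⟨0, 0, c⟩).mulVec v = μ • v := by
    intro c
    apply schur hn ρ hi
    intro g
    rw [← mat_mul, ← mat_mul]
    congr 1
    rw [mul_def', mul_def']
    ext <;> simp [add_comm]
  obtain ⟨v, hv⟩ := exists_ne (0 : Fin n → ℂ)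
  obtain ⟨ψ, hc, h⟩ := char_of_eigen (fun c : R => (⟨0, 0, c⟩ : Heisenberg R)) rfl
    (by intro x y; rw [mul_def']; ext <;> simp)
    (continuous_mk continuous_const continuous_const continuous_id) ρ hρ v hv
    (fun c => (hs c).imp fun μ h => h v)
  refine ⟨ψ, hc, fun c w => ?_⟩
  obtain ⟨μ, hμ⟩ := hs c
  have : μ = ψ c := smul_left_injective ℂ hv ((hμ v).symm.trans (h c))
  rw [← this]
  exact hμ w

theorem central_unique (hn : n ≠ 0) (ρ : Heisenberg R →* GL (Fin n) ℂ) {ψ φ : AddChar R ℂ}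
    (h : IsCentral ρ ψ) (h' : IsCentral ρ φ) : ψ = φ := by
  have : NeZero n := ⟨hn⟩
  obtain ⟨v, hv⟩ := exists_ne (0 : Fin n → ℂ)
  ext c
  exact smul_left_injective ℂ hv ((h c v).symm.trans (h' c v))

/-- normal form: `ρ (a,b,c) e_y = α (a,b,c) ψ (c + a y) e_{y+b}` -/
theorem normal_form (hn : n ≠ 0) (ρ : Heisenberg R →* GL (Fin n) ℂ) (hρ : Continuous (mat ρ))
    (hi : IsIrreducibleRep ρ) (ψ : AddChar R ℂ) (hψ : IsCentral ρ ψ) :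
    ∃ α : Heisenberg R →* ℂˣ, Continuous (fun g => (α g : ℂ)) ∧
      ∃ e : Module.Basis (R ⧸ cond ψ) ℂ (Fin n → ℂ), ∀ g (y : R),
        (mat ρ g).mulVec (e (Ideal.Quotient.mk _ y)) =
          ((α g : ℂ) * ψ (g.c + g.a * y)) • e (Ideal.Quotient.mk _ (y + g.b)) := by
  have : NeZero n := ⟨hn⟩
  let fA : R → Heisenberg R := fun a => ⟨a, 0, 0⟩
  let fB : R → Heisenberg R := fun b => ⟨0, b, 0⟩
  have hfA : ∀ x y, fA (x + y) = fA x * fA y := by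
    intro x y; simp only [fA]; rw [mul_def']; ext <;> simp
  have hfB : ∀ x y, fB (x + y) = fB x * fB y := by
    intro x y; simp only [fB]; rw [mul_def']; ext <;> simp
  obtain ⟨v, hv, hv'⟩ := common_eigen (fun a => Matrix.mulVecLin (mat ρ (fA a))) (by
    intro i j x
    simp only [Matrix.mulVecLin_apply, Matrix.mulVec_mulVec]
    rw [← mat_mul, ← mat_mul, ← hfA, ← hfA, add_comm])
  obtain ⟨w, hw, hw'⟩ := common_eigen (fun a => Matrix.mulVecLin (mat ρ (fB a))) (by
    intro i j x
    simp only [Matrix.mulVecLin_apply, Matrix.mulVec_mulVec]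
    rw [← mat_mul, ← mat_mul, ← hfB, ← hfB, add_comm])
  obtain ⟨l, hlc, hl⟩ := char_of_eigen fA rfl hfA
    (continuous_mk continuous_id continuous_const continuous_const) ρ hρ v hv hv'
  obtain ⟨m, hmc, hm⟩ := char_of_eigen fB rfl hfB
    (continuous_mk continuous_const continuous_id continuous_const) ρ hρ w hw hw'
  have hl0 : ∀ x, l x ≠ 0 := fun x => (l.val_isUnit x).ne_zero
  have hm0 : ∀ x, m x ≠ 0 := fun x => (m.val_isUnit x).ne_zero
  -- elements of the conductor act through `m`
  have hBt : ∀ t ∈ cond ψ, ∀ u, (mat ρ (fB t)).mulVec u = m t • u := by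
    intro t ht
    obtain ⟨μ, hμ⟩ := schur hn ρ hi (mat ρ (fB t)) (by
      intro g
      have h1 : g * fB t = fB t * g * ⟨0, 0, g.a * t⟩ := by
        simp only [fB, mul_def']
        ext <;> simp [add_comm]
      have hz : mat ρ ⟨0, 0, g.a * t⟩ = 1 := by
        apply Matrix.toLin'.injective
        apply LinearMap.ext
        intro u
        rw [Matrix.toLin'_apply, hψ, ht, one_smul]
        simp
      rw [← mat_mul, ← mat_mul, h1, mat_mul _ (fB t * g), hz, mul_one])
    have : μ = m t := smul_left_injective ℂ hw ((hμ w).symm.trans (hm t))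
    rw [← this]
    exact hμ
  let α0 : Heisenberg R →* ℂ :=
    { toFun := fun g => l g.a * m g.b
      map_one' := by
        rw [one_def']; simp
      map_mul' := by
        intro g h
        rw [mul_def', AddChar.map_add_eq_mul, AddChar.map_add_eq_mul]
        ring }
  let vv : R → (Fin n → ℂ) := fun y => (m y)⁻¹ • (mat ρ (fB y)).mulVec v
  have hvv : ∀ y t, t ∈ cond ψ → vv (y + t) = vv y := by
    intro y t ht
    simp only [vv]
    rw [hfB, mat_mul, ← Matrix.mulVec_mulVec, hBt t ht, Matrix.mulVec_smul, smul_smul,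
      AddChar.map_add_eq_mul, mul_inv, mul_assoc, inv_mul_cancel₀ (hm0 t), mul_one]
  let e : R ⧸ cond ψ → (Fin n → ℂ) := fun x => vv (Quotient.out x)
  have he : ∀ y, e (Ideal.Quotient.mk _ y) = vv y := by
    intro y
    have := hvv y _ (mk_eq y (cond ψ))
    rw [add_sub_cancel] at this
    exact this
  have hact : ∀ g y, (mat ρ g).mulVec (vv y) = (l g.a * m g.b * ψ (g.c + g.a * y)) • vv (y + g.b) := by
    intro g y
    have h1 : g * fB y = fB (y + g.b) * fA g.a * ⟨0, 0, g.c + g.a * y⟩ := by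
      simp only [fA, fB, mul_def']
      ext <;> simp [add_comm]
    simp only [vv]
    rw [Matrix.mulVec_smul, Matrix.mulVec_mulVec, ← mat_mul, h1, mat_mul, mat_mul,
      ← Matrix.mulVec_mulVec, hψ, Matrix.mulVec_smul, ← Matrix.mulVec_mulVec, hl,
      Matrix.mulVec_smul, smul_smul, smul_smul, smul_smul, AddChar.map_add_eq_mul m]
    congr 1
    have := hm0 y
    have := hm0 g.b
    field_simp
  have heact : ∀ g y, (mat ρ g).mulVec (e (Ideal.Quotient.mk _ y)) =
      (l g.a * m g.b * ψ (g.c + g.a * y)) • e (Ideal.Quotient.mk _ (y + g.b)) := by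
    intro g y
    rw [he, he, hact]
  have hv0 : ∀ x, e x ≠ 0 := by
    intro x hx
    simp only [e, vv] at hx
    rw [smul_eq_zero] at hx
    rcases hx with hx | hx
    · exact hm0 _ (inv_eq_zero.1 hx)
    · apply hv
      have h2 : (mat ρ (fB (-Quotient.out x))).mulVec ((mat ρ (fB (Quotient.out x))).mulVec v) = v := by
        rw [Matrix.mulVec_mulVec, ← mat_mul, ← hfB, neg_add_cancel]
        show (mat ρ 1).mulVec v = v
        rw [mat_one, Matrix.one_mulVec]
      rw [hx, Matrix.mulVec_zero] at h2
      exact h2.symm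
  have hli : LinearIndependent ℂ e := by
    rw [linearIndependent_iff']
    intro s c hc x hx
    have := sep ψ ⊥ (fun a => Matrix.mulVecLin ((l a)⁻¹ • mat ρ (fA a))) (by
      intro a x hx
      rw [Submodule.mem_bot] at hx ⊢
      rw [hx, map_zero]) e (by
      intro a x
      have h := heact (fA a) (Quotient.out x)
      simp only [fA, add_zero, zero_add, mk_out, AddChar.map_zero_eq_one, mul_one] at h
      rw [Matrix.mulVecLin_apply, Matrix.smul_mulVec, h, smul_smul, inv_mul_cancel_left₀ (hl0 a)])
      s c (by rw [hc]; exact Submodule.zero_mem _) x hx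
    rw [Submodule.mem_bot, smul_eq_zero] at this
    exact this.resolve_right (hv0 x)
  have hspan : ⊤ ≤ Submodule.span ℂ (Set.range e) := by
    have h := hi (Submodule.span ℂ (Set.range e)) (by
      intro g x hx
      induction hx using Submodule.span_induction with
      | mem x hx =>
        obtain ⟨y, rfl⟩ := hx
        have := heact g (Quotient.out y)
        rw [mk_out] at this
        change (mat ρ g).mulVec (e y) ∈ _
        rw [this]
        exact Submodule.smul_mem _ _ (Submodule.subset_span ⟨_, rfl⟩)
      | zero => rw [Matrix.mulVec_zero]; exact Submodule.zero_mem _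
      | add x y _ _ hx hy => rw [Matrix.mulVec_add]; exact Submodule.add_mem _ hx hy
      | smul a x _ hx => rw [Matrix.mulVec_smul]; exact Submodule.smul_mem _ _ hx)
    rcases h with h | h
    · exfalso
      apply hv0 0
      rw [← Submodule.mem_bot ℂ, ← h]
      exact Submodule.subset_span ⟨_, rfl⟩
    · exact h.ge
  refine ⟨α0.toHomUnits, ?_, Module.Basis.mk hli hspan, ?_⟩
  · show Continuous fun g : Heisenberg R => l g.a * m g.b
    exact (hlc.comp continuous_a).mul (hmc.comp continuous_b)
  · intro g y
    rw [Module.Basis.mk_apply, Module.Basis.mk_apply, heact]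
    rfl

end rep
end HeisProof
namespace HeisProof

set_option linter.unusedSectionVars false

section model
variable {R : Type} [CommRing R] {n : ℕ}

/-- the matrix of the model representation -/
def modelMat (ψ : AddChar R ℂ) (ε : R ⧸ cond ψ ≃ Fin n) (g : Heisenberg R) :
    Matrix (Fin n) (Fin n) ℂ :=
  Matrix.of fun j k => open Classical in
    if ε.symm j = ε.symm k + Ideal.Quotient.mk _ g.b then
      ψ (g.c + g.a * Quotient.out (ε.symm k)) else 0

theorem modelMat_single (ψ : AddChar R ℂ) (ε : R ⧸ cond ψ ≃ Fin n) (g : Heisenberg R) (y : R) :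
    (modelMat ψ ε g).mulVec (Pi.single (ε (Ideal.Quotient.mk _ y)) 1) =
      ψ (g.c + g.a * y) • Pi.single (ε (Ideal.Quotient.mk _ (y + g.b))) 1 := by
  classical
  ext j
  rw [Matrix.mulVec_single_one]
  simp only [Matrix.col_apply, modelMat, Matrix.of_apply, Equiv.symm_apply_apply, Pi.smul_apply,
    smul_eq_mul, map_add]
  rw [AddChar.map_add_eq_mul, AddChar.map_add_eq_mul, psi_out]
  by_cases h : j = ε (Ideal.Quotient.mk _ y + Ideal.Quotient.mk _ g.b)
  · subst h
    simp
  · rw [if_neg, Pi.single_eq_of_ne h, mul_zero]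
    intro h'
    exact h (by rw [← h', Equiv.apply_symm_apply])

theorem mat_ext_single (ψ : AddChar R ℂ) (ε : R ⧸ cond ψ ≃ Fin n)
    {M N : Matrix (Fin n) (Fin n) ℂ}
    (h : ∀ y : R, M.mulVec (Pi.single (ε (Ideal.Quotient.mk _ y)) 1) =
      N.mulVec (Pi.single (ε (Ideal.Quotient.mk _ y)) 1)) : M = N := by
  ext i j
  have := h (Quotient.out (ε.symm j))
  rw [mk_out, Equiv.apply_symm_apply, Matrix.mulVec_single_one, Matrix.mulVec_single_one] at this
  exact congrFun this i

/-- the model representation -/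
def model (ψ : AddChar R ℂ) (ε : R ⧸ cond ψ ≃ Fin n) : Heisenberg R →* GL (Fin n) ℂ :=
  MonoidHom.toHomUnits
    { toFun := modelMat ψ ε
      map_one' := by
        apply mat_ext_single ψ ε
        intro y
        rw [modelMat_single, Matrix.one_mulVec, one_def']
        simp
      map_mul' := by
        intro g h
        apply mat_ext_single ψ ε
        intro y
        rw [modelMat_single, ← Matrix.mulVec_mulVec, modelMat_single, Matrix.mulVec_smul,
          modelMat_single, smul_smul, ← AddChar.map_add_eq_mul, mul_def']
        congr 2
        · ring
        · congr 2
          ring_nf }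

theorem mat_model (ψ : AddChar R ℂ) (ε : R ⧸ cond ψ ≃ Fin n) (g : Heisenberg R) :
    mat (model ψ ε) g = modelMat ψ ε g := rfl

theorem model_central (ψ : AddChar R ℂ) (ε : R ⧸ cond ψ ≃ Fin n) : IsCentral (model ψ ε) ψ := by
  intro c v
  have : mat (model ψ ε) ⟨0, 0, c⟩ = ψ c • (1 : Matrix (Fin n) (Fin n) ℂ) := by
    apply mat_ext_single ψ ε
    intro y
    rw [mat_model, modelMat_single, Matrix.smul_mulVec, Matrix.one_mulVec]
    simp
  rw [this, Matrix.smul_mulVec, Matrix.one_mulVec]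

theorem model_irr (ψ : AddChar R ℂ) (ε : R ⧸ cond ψ ≃ Fin n) : IsIrreducibleRep (model ψ ε) := by
  classical
  intro U hU
  have hU' : ∀ g, ∀ x ∈ U, (modelMat ψ ε g).mulVec x ∈ U := hU
  by_cases h0 : U = ⊥
  · exact Or.inl h0
  right
  obtain ⟨u, hu, hu0⟩ := U.ne_bot_iff.1 h0
  obtain ⟨j, hj⟩ : ∃ j, u j ≠ 0 := by
    by_contra hcon
    push Not at hcon
    exact hu0 (funext hcon)
  have : Fintype (R ⧸ cond ψ) := Fintype.ofEquiv _ ε.symm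
  have hs := sep ψ U (fun a => Matrix.mulVecLin (modelMat ψ ε ⟨a, 0, 0⟩)) (fun a x hx => hU' _ x hx)
    (fun x => Pi.single (ε x) (1 : ℂ)) (by
      intro a x
      have := modelMat_single ψ ε ⟨a, 0, 0⟩ (Quotient.out x)
      simp only [add_zero, zero_add, mk_out] at this
      exact this) Finset.univ (fun x => u (ε x)) (by
      have : ∑ x : R ⧸ cond ψ, u (ε x) • (Pi.single (ε x) (1 : ℂ) : Fin n → ℂ) = u := by
        rw [Equiv.sum_comp ε (fun k => u k • (Pi.single k (1 : ℂ) : Fin n → ℂ))]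
        ext k
        simp [Finset.sum_apply, Pi.single_apply]
      rw [this]
      exact hu) (ε.symm j) (Finset.mem_univ _)
  simp only [Equiv.apply_symm_apply] at hs
  have hj' : (Pi.single j (1 : ℂ) : Fin n → ℂ) ∈ U := (U.smul_mem_iff hj).1 hs
  have hall : ∀ k, (Pi.single k (1 : ℂ) : Fin n → ℂ) ∈ U := by
    intro k
    have := hU' ⟨0, Quotient.out (ε.symm k) - Quotient.out (ε.symm j), 0⟩ _ hj'
    have h2 := modelMat_single ψ ε
      ⟨0, Quotient.out (ε.symm k) - Quotient.out (ε.symm j), 0⟩ (Quotient.out (ε.symm j))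
    simp only [mk_out, Equiv.apply_symm_apply, add_sub_cancel, zero_mul, add_zero,
      AddChar.map_zero_eq_one, one_smul] at h2
    rwa [h2] at this
  rw [eq_top_iff]
  intro x _
  have : x = ∑ k, x k • (Pi.single k (1 : ℂ) : Fin n → ℂ) := by
    ext k
    simp [Finset.sum_apply, Pi.single_apply]
  rw [this]
  exact Submodule.sum_mem _ fun k _ => U.smul_mem _ (hall k)

variable [TopologicalSpace R] [IsTopologicalRing R]

theorem cond_open (ψ : AddChar R ℂ) (hc : Continuous ψ) [Finite (R ⧸ cond ψ)] :
    IsOpen (X := R) (cond ψ) := by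
  have hcl : IsClosed (X := R) (cond ψ) := by
    have : ((cond ψ : Ideal R) : Set R) = ⋂ r : R, {c | ψ (r * c) = 1} := by
      ext c
      simp [mem_cond]
    rw [this]
    exact isClosed_iInter fun r =>
      isClosed_eq (hc.comp (continuous_const.mul continuous_id)) continuous_const
  have : (cond ψ).toAddSubgroup.FiniteIndex :=
    @AddSubgroup.finiteIndex_of_finite_quotient _ _ _ ‹Finite (R ⧸ cond ψ)›
  exact (cond ψ).toAddSubgroup.isOpen_of_isClosed_of_finiteIndex hcl

theorem model_cont (ψ : AddChar R ℂ) (hc : Continuous ψ) (ε : R ⧸ cond ψ ≃ Fin n) :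
    Continuous (mat (model ψ ε)) := by
  have : Finite (R ⧸ cond ψ) := Finite.of_equiv _ ε.symm
  have hop := cond_open ψ hc
  have hlc : ∀ x y : R ⧸ cond ψ, Continuous fun b : R => open Classical in
      if x = y + Ideal.Quotient.mk _ b then (1 : ℂ) else 0 := by
    intro x y
    rw [continuous_iff_continuousAt]
    intro b
    have h1 : ∀ᶠ b' in nhds b, (open Classical in
        if x = y + Ideal.Quotient.mk (cond ψ) b' then (1 : ℂ) else 0) = (open Classical in
        if x = y + Ideal.Quotient.mk (cond ψ) b then (1 : ℂ) else 0) := by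
      have h0 : (fun y => y - b) ⁻¹' ((cond ψ : Ideal R) : Set R) ∈ nhds b := by
        apply (hop.preimage (by fun_prop)).mem_nhds
        simp
      filter_upwards [h0] with b' hb'
      rw [(Ideal.Quotient.eq (I := cond ψ)).2 hb']
    exact (continuousAt_congr h1).2 continuousAt_const
  refine continuous_matrix fun j k => ?_
  have : (fun g : Heisenberg R => mat (model ψ ε) g j k) = fun g => (open Classical in
      if ε.symm j = ε.symm k + Ideal.Quotient.mk (cond ψ) g.b then (1 : ℂ) else 0) *
        ψ (g.c + g.a * Quotient.out (ε.symm k)) := by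
    ext g
    rw [mat_model, modelMat, Matrix.of_apply]
    split_ifs <;> simp
  rw [this]
  exact ((hlc _ _).comp continuous_b).mul
    (hc.comp (continuous_c.add (continuous_a.mul continuous_const)))

theorem twist_central (ρ σ : ContIrrRep (Heisenberg R) n) (h : contTwistRel _ n ρ σ)
    (ψ : AddChar R ℂ) (hψ : IsCentral σ.1 ψ) : IsCentral ρ.1 ψ := by
  obtain ⟨α, -, T, hT⟩ := h
  intro c v
  have hα : α ⟨0, 0, c⟩ = 1 := by
    have h1 : (⟨c, 0, 0⟩ : Heisenberg R) * ⟨0, 1, 0⟩ = ⟨0, 1, 0⟩ * ⟨c, 0, 0⟩ * ⟨0, 0, c⟩ := by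
      simp only [mul_def']
      ext <;> simp
    have h2 := congrArg α h1
    rw [map_mul, map_mul, map_mul, mul_comm (α ⟨c, 0, 0⟩)] at h2
    exact (left_eq_mul.1 h2)
  have hσ : mat σ.1 ⟨0, 0, c⟩ = ψ c • (1 : Matrix (Fin n) (Fin n) ℂ) := by
    apply Matrix.toLin'.injective
    apply LinearMap.ext
    intro u
    rw [Matrix.toLin'_apply, hψ, Matrix.toLin'_apply, Matrix.smul_mulVec, Matrix.one_mulVec]
  have h3 : mat ρ.1 ⟨0, 0, c⟩ = ψ c • (1 : Matrix (Fin n) (Fin n) ℂ) := by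
    rw [mat, hT, hα, Units.val_one, one_smul, Units.val_mul, Units.val_mul]
    change (T : Matrix (Fin n) (Fin n) ℂ) * mat σ.1 ⟨0, 0, c⟩ * _ = _
    rw [hσ, mul_smul_comm, mul_one, smul_mul_assoc, Units.mul_inv]
  rw [h3, Matrix.smul_mulVec, Matrix.one_mulVec]

theorem rel_of_central (hn : n ≠ 0) (ρ σ : ContIrrRep (Heisenberg R) n)
    (ψ : AddChar R ℂ) (h : IsCentral ρ.1 ψ) (h' : IsCentral σ.1 ψ) : contTwistRel _ n ρ σ := by
  obtain ⟨α, hα, e, he⟩ := normal_form hn ρ.1 ρ.2.1 ρ.2.2 ψ h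
  obtain ⟨β, hβ, f, hf⟩ := normal_form hn σ.1 σ.2.1 σ.2.2 ψ h'
  let E : (Fin n → ℂ) ≃ₗ[ℂ] (Fin n → ℂ) := f.equiv e (Equiv.refl _)
  have hE : ∀ x, E (f x) = e x := fun x => by simp [E]
  let T : GL (Fin n) ℂ := ⟨LinearMap.toMatrix' E.toLinearMap, LinearMap.toMatrix' E.symm.toLinearMap,
    by rw [← LinearMap.toMatrix'_comp]; simp, by rw [← LinearMap.toMatrix'_comp]; simp⟩
  have hTv : ∀ v, (T : Matrix (Fin n) (Fin n) ℂ).mulVec v = E v := by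
    intro v
    show (LinearMap.toMatrix' E.toLinearMap).mulVec v = E v
    rw [LinearMap.toMatrix'_mulVec]
    rfl
  refine ⟨α * β⁻¹, ?_, T, ?_⟩
  · have : (fun g => (((α * β⁻¹) g : ℂˣ) : ℂ)) = fun g => (α g : ℂ) * (β g : ℂ)⁻¹ := by
      ext g
      simp
    rw [this]
    exact hα.mul (hβ.inv₀ fun g => (β g).ne_zero)
  · intro g
    have key : mat ρ.1 g * (T : Matrix (Fin n) (Fin n) ℂ) =
        (((α * β⁻¹) g : ℂˣ) : ℂ) • ((T : Matrix (Fin n) (Fin n) ℂ) * mat σ.1 g) := by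
      apply Matrix.toLin'.injective
      apply f.ext
      intro x
      rw [← mk_out _ x, Matrix.toLin'_apply, Matrix.toLin'_apply, Matrix.smul_mulVec,
        ← Matrix.mulVec_mulVec, ← Matrix.mulVec_mulVec, hTv, hE, he, hf, hTv, map_smul, hE,
        smul_smul]
      congr 1
      have := (β g).ne_zero
      simp
      field_simp
    rw [Units.val_mul, Units.val_mul, ← smul_mul_assoc]
    change mat ρ.1 g = _ • ((T : Matrix (Fin n) (Fin n) ℂ) * mat σ.1 g) * _
    rw [← key, mul_assoc, Units.mul_inv, mul_one]

theorem rTilde_eq (hn : n ≠ 0) : rTildeCont (Heisenberg R) n =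
    Nat.card {ψ : AddChar R ℂ // Continuous ψ ∧ Nat.card (R ⧸ cond ψ) = n} := by
  have hex : ∀ ρ : ContIrrRep (Heisenberg R) n, ∃ ψ : AddChar R ℂ,
      (Continuous ψ ∧ Nat.card (R ⧸ cond ψ) = n) ∧ IsCentral ρ.1 ψ := by
    intro ρ
    obtain ⟨ψ, hc, h⟩ := exists_central hn ρ.1 ρ.2.1 ρ.2.2
    obtain ⟨-, -, e, -⟩ := normal_form hn ρ.1 ρ.2.1 ρ.2.2 ψ h
    have := Module.finrank_eq_nat_card_basis e
    rw [Module.finrank_fin_fun] at this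
    exact ⟨ψ, ⟨hc, this.symm⟩, h⟩
  choose Ψ hΨ hΨc using hex
  let F : Quot (contTwistRel (Heisenberg R) n) →
      {ψ : AddChar R ℂ // Continuous ψ ∧ Nat.card (R ⧸ cond ψ) = n} :=
    Quot.lift (fun ρ => ⟨Ψ ρ, hΨ ρ⟩) (by
      intro ρ σ h
      apply Subtype.ext
      exact central_unique hn ρ.1 (hΨc ρ) (twist_central ρ σ h _ (hΨc σ)))
  apply Nat.card_eq_of_bijective F
  constructor
  · intro x y
    induction x using Quot.ind with | mk ρ => ?_
    induction y using Quot.ind with | mk σ => ?_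
    intro hxy
    have : Ψ ρ = Ψ σ := congrArg Subtype.val hxy
    exact Quot.sound (rel_of_central hn ρ σ (Ψ ρ) (hΨc ρ) (this ▸ hΨc σ))
  · rintro ⟨ψ, hc, hcard⟩
    have : Finite (R ⧸ cond ψ) := Nat.finite_of_card_ne_zero (hcard ▸ hn)
    let ε : R ⧸ cond ψ ≃ Fin n := Finite.equivFinOfCardEq hcard
    refine ⟨Quot.mk _ ⟨model ψ ε, model_cont ψ hc ε, model_irr ψ ε⟩, ?_⟩
    apply Subtype.ext
    exact central_unique hn _ (hΨc _) (model_central ψ ε)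

end model
end HeisProof

theorem stmt1 :
    ∃ S : Finset ℕ, ∀ (p : ℕ) [Fact p.Prime], p ∉ S →
      ∀ (K : Type) [NormedField K] [NormedAlgebra ℚ_[p] K] [FiniteDimensional ℚ_[p] K]
        [Algebra ℤ_[p] K] [IsScalarTower ℤ_[p] ℚ_[p] K],
      ∀ 𝔓 : Ideal (integralClosure ℤ_[p] K), 𝔓.IsMaximal →
        rTildeCont (Heisenberg (integralClosure ℤ_[p] K)) 1 = 1 ∧
        (∀ i : ℕ, 1 ≤ i →
          rTildeCont (Heisenberg (integralClosure ℤ_[p] K))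
              (Nat.card ((integralClosure ℤ_[p] K) ⧸ 𝔓) ^ i)
            = Nat.card ((integralClosure ℤ_[p] K) ⧸ 𝔓) ^ i
              - Nat.card ((integralClosure ℤ_[p] K) ⧸ 𝔓) ^ (i - 1)) ∧
        (∀ n : ℕ, 2 ≤ n →
          (∀ i : ℕ, 1 ≤ i → n ≠ Nat.card ((integralClosure ℤ_[p] K) ⧸ 𝔓) ^ i) →
          rTildeCont (Heisenberg (integralClosure ℤ_[p] K)) n = 0) := by
  refine ⟨∅, ?_⟩
  intro p _ _ K _ _ _ _ _ P hP
  have h1 := HeisProof.compact_O p K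
  have h2 := HeisProof.dedekind_O p K
  have h3 := HeisProof.local_O p K
  have h4 := HeisProof.not_field_O p K
  have hq := HeisProof.one_lt_q P hP
  refine ⟨?_, ?_, ?_⟩
  · rw [HeisProof.rTilde_eq one_ne_zero]
    exact HeisProof.count_one _
  · intro i hi
    rw [HeisProof.rTilde_eq (pow_ne_zero _ (by omega))]
    exact HeisProof.count_pow h4 P hP i hi
  · intro n hn h
    rw [HeisProof.rTilde_eq (by omega)]
    exact HeisProof.count_other h4 P hP n hn h
end
end

section
/- Let q > 1 be an integer. For each i = 1, …, r, let N_i: ℤ → ℂ be a function of the form N_i(f) = Σ_{j=1}^{u_i} m_{ij} α_{ij}^f, where the m_{ij} are nonzero integers and α_{i1}, …, α_{iu_i} are distinct nonzero complex numbers. Let W_1, …, W_r ∈ ℚ(X, Y_1, …, Y_m) each be regular at (q^f, Y_1, …, Y_m) for all f ∈ ℤ∖{0}. If Σ_{i=1}^r N_i(f) · W_i(q^f, Y_1, …, Y_m) = 0 in ℂ(Y_1, …, Y_m) for all f ∈ ℕ, then the same identity holds for all f ∈ ℤ∖{0}. -/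
noncomputable section

abbrev PolyXY (m : ℕ) := MvPolynomial (Fin (m + 1)) ℚ
abbrev RatXY (m : ℕ) := FractionRing (PolyXY m)
/-- the field ℂ(Y₁,…,Y_m) -/
abbrev CRatY (m : ℕ) := FractionRing (MvPolynomial (Fin m) ℂ)

/-- substitution X ↦ q, Yⱼ ↦ Yⱼ, landing in ℂ(Y₁,…,Y_m) -/
def specXC (m : ℕ) (q : ℚ) : PolyXY m →+* CRatY m :=
  (algebraMap (MvPolynomial (Fin m) ℂ) (CRatY m)).comp
    ((MvPolynomial.map (Rat.castHom ℂ)).comp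
      (MvPolynomial.eval₂Hom MvPolynomial.C
        (Fin.cases (MvPolynomial.C q) fun j => MvPolynomial.X j)))

def castC (m : ℕ) (z : ℂ) : CRatY m :=
  algebraMap (MvPolynomial (Fin m) ℂ) (CRatY m) (MvPolynomial.C z)

def RegularAtXC {m : ℕ} (W : RatXY m) (q : ℚ) : Prop :=
  ∃ gh : PolyXY m × PolyXY m, specXC m q gh.2 ≠ 0 ∧
    W * algebraMap (PolyXY m) (RatXY m) gh.2 = algebraMap (PolyXY m) (RatXY m) gh.1

open scoped Classical in
def evalAtXC {m : ℕ} (W : RatXY m) (q : ℚ) : CRatY m :=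
  if h : RegularAtXC W q then specXC m q h.choose.1 / specXC m q h.choose.2 else 0

open Polynomial in
def phiXC (m : ℕ) : PolyXY m →+* Polynomial (CRatY m) :=
  MvPolynomial.eval₂Hom ((Polynomial.C : CRatY m →+* _).comp
      ((algebraMap (MvPolynomial (Fin m) ℂ) (CRatY m)).comp
        ((MvPolynomial.C).comp (Rat.castHom ℂ))))
    (Fin.cases Polynomial.X fun j =>
      Polynomial.C (algebraMap (MvPolynomial (Fin m) ℂ) (CRatY m) (MvPolynomial.X j)))

theorem spec_eq_eval (m : ℕ) (q : ℚ) (p : PolyXY m) :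
    specXC m q p = (phiXC m p).eval (castC m (q : ℂ)) := by
  have : specXC m q = (Polynomial.evalRingHom (castC m (q : ℂ))).comp (phiXC m) := by
    apply MvPolynomial.ringHom_ext
    · intro r
      simp [specXC, phiXC, castC]
      try exact map_ratCast ((algebraMap (MvPolynomial (Fin m) ℂ) (CRatY m)).comp
        MvPolynomial.C) r
    · intro i
      refine Fin.cases ?_ (fun j => ?_) i
      · simp [specXC, phiXC, castC]
      · simp [specXC, phiXC, castC]
  rw [this]; rfl

theorem evalAt_eq {m : ℕ} (W : RatXY m) (q : ℚ) (g h : PolyXY m)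
    (hh : specXC m q h ≠ 0)
    (hW : W * algebraMap (PolyXY m) (RatXY m) h = algebraMap (PolyXY m) (RatXY m) g) :
    evalAtXC W q = specXC m q g / specXC m q h := by
  have hr : RegularAtXC W q := ⟨(g, h), hh, hW⟩
  rw [evalAtXC, dif_pos hr]
  obtain ⟨h1, h2⟩ := hr.choose_spec
  rw [div_eq_div_iff h1 hh, ← map_mul, ← map_mul]
  congr 1
  apply IsFractionRing.injective (PolyXY m) (RatXY m)
  rw [map_mul, map_mul, ← h2, ← hW]
  ring

def shiftT (K : Type*) [Field K] : Module.End K (ℤ → K) where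
  toFun s := fun f => s (f + 1)
  map_add' _ _ := rfl
  map_smul' _ _ := rfl

theorem shiftT_pow (K : Type*) [Field K] (n : ℕ) (s : ℤ → K) (f : ℤ) :
    ((shiftT K) ^ n) s f = s (f + n) := by
  induction n generalizing f with
  | zero => simp
  | succ n ih =>
    rw [pow_succ', Module.End.mul_apply]
    change ((shiftT K) ^ n) s (f + 1) = _
    rw [ih]; congr 1; push_cast; ring

def expSet (K : Type*) [Field K] : Submonoid (ℤ → K) where
  carrier := {s | ∃ β : K, β ≠ 0 ∧ s = fun f => β ^ f}
  one_mem' := ⟨1, one_ne_zero, by ext f; simp⟩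
  mul_mem' := by
    rintro _ _ ⟨a, ha, rfl⟩ ⟨b, hb, rfl⟩
    exact ⟨a * b, mul_ne_zero ha hb, by ext f; simp [mul_zpow]⟩

theorem exp_annihil (K : Type*) [Field K] (s : ℤ → K)
    (hs : s ∈ Algebra.adjoin K (expSet K : Set (ℤ → K))) :
    ∃ P : Polynomial K, P.coeff 0 ≠ 0 ∧ Polynomial.aeval (shiftT K) P s = 0 := by
  rw [← Subalgebra.mem_toSubmodule, Algebra.adjoin_eq_span, Submonoid.closure_eq] at hs
  induction hs using Submodule.span_induction with
  | mem x hx =>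
    obtain ⟨β, hβ, rfl⟩ := hx
    refine ⟨Polynomial.X - Polynomial.C β, by simpa using hβ, ?_⟩
    ext f
    simp only [map_sub, Polynomial.aeval_X, Polynomial.aeval_C, LinearMap.sub_apply, Pi.sub_apply,
      Module.algebraMap_end_apply, Pi.smul_apply, smul_eq_mul, Pi.zero_apply]
    change β ^ (f + 1) - _ = 0
    rw [zpow_add_one₀ hβ]; ring
  | zero => exact ⟨1, by simp, by simp⟩
  | add x y _ _ hx hy =>
    obtain ⟨P, hP, hPx⟩ := hx
    obtain ⟨Q, hQ, hQy⟩ := hy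
    refine ⟨P * Q, by rw [Polynomial.mul_coeff_zero]; exact mul_ne_zero hP hQ, ?_⟩
    rw [map_add, map_mul, Module.End.mul_apply, Module.End.mul_apply, hQy, map_zero, add_zero,
      ← Module.End.mul_apply, ← map_mul, mul_comm, map_mul, Module.End.mul_apply, hPx, map_zero]
  | smul a x _ hx =>
    obtain ⟨P, hP, hPx⟩ := hx
    exact ⟨P, hP, by rw [map_smul, hPx, smul_zero]⟩

theorem exp_vanish (K : Type*) [Field K] (s : ℤ → K)
    (hs : s ∈ Algebra.adjoin K (expSet K : Set (ℤ → K))) (F : ℤ)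
    (hF : ∀ f, F ≤ f → s f = 0) (f : ℤ) : s f = 0 := by
  obtain ⟨P, hP, hPs⟩ := exp_annihil K s hs
  have key : ∀ f : ℤ, ∑ k ∈ Finset.range (P.natDegree + 1), P.coeff k * s (f + k) = 0 := by
    intro f
    have := congrFun hPs f
    rw [Polynomial.aeval_eq_sum_range] at this
    simpa [shiftT_pow, LinearMap.sum_apply, Finset.sum_apply] using this
  have step : ∀ n : ℕ, ∀ f, F - n ≤ f → s f = 0 := by
    intro n
    induction n with
    | zero => intro f hf; exact hF f (by simpa using hf)
    | succ n ih =>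
      intro f hf
      have h := key f
      rw [Finset.sum_range_succ', Finset.sum_eq_zero, zero_add] at h
      · simpa [hP] using h
      · intro k _
        rw [ih, mul_zero]
        push_cast at hf ⊢
        omega
  exact step (F - f).toNat f (by omega)

theorem castC_inj (m : ℕ) : Function.Injective (castC m) :=
  (IsFractionRing.injective (MvPolynomial (Fin m) ℂ) (CRatY m)).comp
    (MvPolynomial.C_injective _ _)

def castHomC (m : ℕ) : ℂ →+* CRatY m :=
  (algebraMap (MvPolynomial (Fin m) ℂ) (CRatY m)).comp MvPolynomial.C

theorem castC_eq (m : ℕ) (z : ℂ) : castC m z = castHomC m z := rfl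

theorem zpow_mem_exp (K : Type*) [Field K] (β : K) (hβ : β ≠ 0) :
    (fun f : ℤ => β ^ f) ∈ Algebra.adjoin K (expSet K : Set (ℤ → K)) :=
  Algebra.subset_adjoin ⟨β, hβ, rfl⟩

theorem spec_mem_exp (m : ℕ) (q : ℤ) (hq : 1 < q) (p : PolyXY m) :
    (fun f : ℤ => specXC m ((q : ℚ) ^ f) p) ∈
      Algebra.adjoin (CRatY m) (expSet (CRatY m) : Set (ℤ → CRatY m)) := by
  have hb : castHomC m (q : ℂ) ≠ 0 := by
    rw [map_ne_zero]; exact_mod_cast (by omega : q ≠ 0)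
  have : (fun f : ℤ => specXC m ((q : ℚ) ^ f) p) =
      Polynomial.aeval (fun f : ℤ => (castHomC m (q : ℂ)) ^ f) (phiXC m p) := by
    ext f
    rw [spec_eq_eval, castC_eq, Polynomial.aeval_eq_sum_range, Polynomial.eval_eq_sum_range]
    simp [Finset.sum_apply, map_zpow₀]
  rw [this]
  rw [Polynomial.aeval_eq_sum_range]
  exact Subalgebra.sum_mem _ fun k _ => Subalgebra.smul_mem _
    (Subalgebra.pow_mem _ (zpow_mem_exp _ _ hb) k) _

theorem num_mem_exp (m n : ℕ) (c : Fin n → ℤ) (a : Fin n → ℂ) (ha : ∀ j, a j ≠ 0) :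
    (fun f : ℤ => castC m (∑ j, (c j : ℂ) * a j ^ f)) ∈
      Algebra.adjoin (CRatY m) (expSet (CRatY m) : Set (ℤ → CRatY m)) := by
  have : (fun f : ℤ => castC m (∑ j, (c j : ℂ) * a j ^ f)) =
      ∑ j, castHomC m (c j : ℂ) • (fun f : ℤ => castHomC m (a j) ^ f) := by
    ext f
    rw [castC_eq, map_sum]
    simp [Finset.sum_apply, map_zpow₀]
  rw [this]
  exact Subalgebra.sum_mem _ fun j _ => Subalgebra.smul_mem _
    (zpow_mem_exp _ _ ((map_ne_zero _).2 (ha j))) _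

theorem spec_ne_large (m : ℕ) (q : ℤ) (hq : 1 < q) (p : PolyXY m) (f0 : ℤ)
    (h0 : specXC m ((q : ℚ) ^ f0) p ≠ 0) :
    ∃ F : ℤ, ∀ f, F ≤ f → specXC m ((q : ℚ) ^ f) p ≠ 0 := by
  have hp : phiXC m p ≠ 0 := by
    intro h; apply h0; rw [spec_eq_eval, h, Polynomial.eval_zero]
  have hinj : Function.Injective (fun f : ℤ => castC m (((q : ℚ) ^ f : ℚ) : ℂ)) := by
    intro a b hab
    have h1 := Rat.cast_injective (castC_inj m hab)
    have hq' : (1 : ℚ) < q := by exact_mod_cast hq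
    exact zpow_right_injective₀ (by linarith) (by linarith) h1
  have hfin : {f : ℤ | specXC m ((q : ℚ) ^ f) p = 0}.Finite := by
    refine Set.Finite.subset ((Polynomial.finite_setOfPred_isRoot hp).preimage hinj.injOn) ?_
    intro f hf
    simpa [spec_eq_eval, Polynomial.IsRoot] using hf
  obtain ⟨B, hB⟩ := hfin.bddAbove
  refine ⟨B + 1, fun f hf h => ?_⟩
  have := hB h
  omega

theorem stmt8 (m : ℕ) (q : ℤ) (hq : 1 < q) (r : ℕ)
    (u : Fin r → ℕ)
    (mm : (i : Fin r) → Fin (u i) → ℤ) (α : (i : Fin r) → Fin (u i) → ℂ)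
    (hm : ∀ i j, mm i j ≠ 0) (hα0 : ∀ i j, α i j ≠ 0)
    (hdist : ∀ i, Function.Injective (α i))
    (W : Fin r → RatXY m)
    (hreg : ∀ i, ∀ f : ℤ, f ≠ 0 → RegularAtXC (W i) ((q : ℚ) ^ f))
    (hvan : ∀ f : ℕ, 1 ≤ f →
      ∑ i, castC m (∑ j, (mm i j : ℂ) * α i j ^ (f : ℤ))
          * evalAtXC (W i) ((q : ℚ) ^ (f : ℤ)) = 0) :
    ∀ f : ℤ, f ≠ 0 →
      ∑ i, castC m (∑ j, (mm i j : ℂ) * α i j ^ f)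
          * evalAtXC (W i) ((q : ℚ) ^ f) = 0 := by
  intro f0 hf0
  choose gh hne hW using fun i => hreg i f0 hf0
  set H : PolyXY m := ∏ i, (gh i).2 with hH
  have hHne : specXC m ((q : ℚ) ^ f0) H ≠ 0 := by
    rw [hH, map_prod]; exact Finset.prod_ne_zero_iff.2 fun i _ => hne i
  have hG : ∀ i, ∃ G : PolyXY m,
      W i * algebraMap (PolyXY m) (RatXY m) H = algebraMap (PolyXY m) (RatXY m) G := by
    intro i
    refine ⟨(gh i).1 * ∏ j ∈ Finset.univ.erase i, (gh j).2, ?_⟩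
    rw [hH, ← Finset.mul_prod_erase _ _ (Finset.mem_univ i), map_mul, map_mul, ← mul_assoc, hW]
  choose G hG using hG
  obtain ⟨F, hF⟩ := spec_ne_large m q hq H f0 hHne
  have hsum : ∀ f : ℤ, specXC m ((q : ℚ) ^ f) H ≠ 0 →
      ∑ i, castC m (∑ j, (mm i j : ℂ) * α i j ^ f) * evalAtXC (W i) ((q : ℚ) ^ f) =
      (∑ i, castC m (∑ j, (mm i j : ℂ) * α i j ^ f) * specXC m ((q : ℚ) ^ f) (G i)) /
        specXC m ((q : ℚ) ^ f) H := by
    intro f hf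
    rw [Finset.sum_div]
    refine Finset.sum_congr rfl fun i _ => ?_
    rw [evalAt_eq (W i) _ (G i) H hf (hG i), mul_div_assoc]
  rw [hsum f0 hHne]
  have hmem : (∑ i, (fun f : ℤ => castC m (∑ j, (mm i j : ℂ) * α i j ^ f)) *
      (fun f : ℤ => specXC m ((q : ℚ) ^ f) (G i))) ∈
      Algebra.adjoin (CRatY m) (expSet (CRatY m) : Set (ℤ → CRatY m)) :=
    Subalgebra.sum_mem _ fun i _ => Subalgebra.mul_mem _
      (num_mem_exp m (u i) (mm i) (α i) (hα0 i)) (spec_mem_exp m q hq (G i))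
  have hz := exp_vanish _ _ hmem (max F 1) (by
    intro f hf
    have hf1 : 1 ≤ f := le_trans (le_max_right _ _) hf
    have hfF := hF f (le_trans (le_max_left _ _) hf)
    obtain ⟨n, rfl⟩ := Int.eq_ofNat_of_zero_le (by omega : 0 ≤ f)
    have h := hvan n (by omega)
    rw [hsum _ hfF, div_eq_zero_iff, or_iff_left hfF] at h
    simpa only [Finset.sum_apply, Pi.mul_apply] using h) f0
  simp only [Finset.sum_apply, Pi.mul_apply] at hz
  rw [hz, zero_div]
end
end

section
/- Let m_1, …, m_u be nonzero integers and let α_1, …, α_u be distinct nonzero algebraic numbers (elements of the algebraic closure of ℚ inside ℂ). If Σ_{i=1}^u m_i α_i^f is a rational number for every f ∈ ℕ, then Σ_{i=1}^u m_i α_i^f is a rational number for every f ∈ ℤ. -/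
theorem stmt9 (u : ℕ) (m : Fin u → ℤ) (α : Fin u → ℂ)
    (hm : ∀ i, m i ≠ 0)
    (halg : ∀ i, IsAlgebraic ℚ (α i))
    (hα : ∀ i, α i ≠ 0)
    (hdist : Function.Injective α)
    (hrat : ∀ f : ℕ, 1 ≤ f → ∃ x : ℚ, (x : ℂ) = ∑ i, (m i : ℂ) * α i ^ (f : ℤ)) :
    ∀ f : ℤ, ∃ x : ℚ, (x : ℂ) = ∑ i, (m i : ℂ) * α i ^ f := by
  obtain ⟨P, hP0, hP⟩ : ∃ P : Polynomial ℚ, P.coeff 0 ≠ 0 ∧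
      ∀ i, Polynomial.aeval (α i) P = 0 := by
    refine ⟨∏ i, minpoly ℚ (α i), ?_, fun i => ?_⟩
    · rw [Polynomial.coeff_zero_eq_eval_zero, Polynomial.eval_prod, Finset.prod_ne_zero_iff]
      intro i _
      rw [← Polynomial.coeff_zero_eq_eval_zero]
      exact minpoly.coeff_zero_ne_zero (halg i).isIntegral (hα i)
    · rw [map_prod]
      exact Finset.prod_eq_zero (Finset.mem_univ i) (minpoly.aeval _ _)
  set s : ℤ → ℂ := fun f => ∑ i, (m i : ℂ) * α i ^ f with hs
  have hrec : ∀ f : ℤ, ∑ k ∈ Finset.range (P.natDegree + 1), (P.coeff k : ℂ) * s (f + k) = 0 := by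
    intro f
    have h1 : ∀ i, ∑ k ∈ Finset.range (P.natDegree + 1), (P.coeff k : ℂ) * α i ^ k = 0 := by
      intro i
      have := hP i
      rw [Polynomial.aeval_eq_sum_range] at this
      simpa [Algebra.smul_def] using this
    simp only [hs, Finset.mul_sum]
    rw [Finset.sum_comm]
    refine Finset.sum_eq_zero fun i _ => ?_
    have : ∀ k : ℕ, (P.coeff k : ℂ) * ((m i : ℂ) * α i ^ (f + (k : ℤ)))
        = (m i : ℂ) * α i ^ f * ((P.coeff k : ℂ) * α i ^ k) := by
      intro k
      rw [zpow_add₀ (hα i), zpow_natCast]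
      ring
    simp only [this]
    rw [← Finset.mul_sum, h1, mul_zero]
  have key : ∀ n : ℕ, ∀ f : ℤ, 1 - (n : ℤ) ≤ f → ∃ x : ℚ, (x : ℂ) = s f := by
    intro n
    induction n with
    | zero =>
      intro f hf
      obtain ⟨g, rfl⟩ := Int.eq_ofNat_of_zero_le (show 0 ≤ f by push_cast at hf; omega)
      exact hrat g (by push_cast at hf; omega)
    | succ n ih =>
      intro f hf
      have hx : ∀ k : ℕ, ∃ x : ℚ, (x : ℂ) = s (f + ((k + 1 : ℕ) : ℤ)) := fun k =>
        ih _ (by push_cast at hf ⊢; omega)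
      choose x hx using hx
      have h := hrec f
      rw [Finset.sum_range_succ'] at h
      simp only [← hx] at h
      refine ⟨-(∑ k ∈ Finset.range P.natDegree, P.coeff (k + 1) * x k) / P.coeff 0, ?_⟩
      have h0 : (P.coeff 0 : ℂ) ≠ 0 := by exact_mod_cast hP0
      push_cast
      rw [div_eq_iff h0]
      simp only [Nat.cast_zero, add_zero] at h
      linear_combination -h
  intro f
  exact key (1 - f).toNat f (by omega)
end
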